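/- arXiv:0811.2284 — 6 statements merged into one kernel-verified Lean document; each statement's English description precedes it below -/
import Mathlib

section
/- Let (Ω, Σ, μ) be a finite measure space, X and Y Banach spaces, and let Φ: Ω → L(X,Y) be strongly μ-measurable (as a function with values in the Banach space L(X,Y) with the operator norm). Then for every ε > 0 there exists a strongly μ-measurable function f: Ω → X such that for μ-almost all ω ∈ Ω one has ‖f(ω)‖ ≤ 1 and ‖Φ(ω)‖ ≤ ‖Φ(ω)f(ω)‖ + ε. -/
open MeasureTheory

/-!
For a fixed operator `T` there is a vector `x` of norm less than `1` with `‖T‖ < ‖T x‖ + ε`, and by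
continuity the same `x` serves all operators in a neighbourhood of `T`. Off a null set, a strongly
measurable `Φ` takes its values in a separable, hence Lindelöf, set, so countably many of these
vectors serve all these values; let `f ω` be the first of them that serves `Φ ω`.
-/

open Set TopologicalSpace
open scoped Topology

theorem isLindelof_of_isSeparable {E : Type*} [TopologicalSpace E] [PseudoMetrizableSpace E]
    {s : Set E} (hs : IsSeparable s) : IsLindelof s := by
  have := hs.secondCountableTopology
  exact isLindelof_iff_lindelofSpace.mpr inferInstance

theorem exists_stronglyMeasurable_selection_of_eventually
    {Ω E Z : Type*} [MeasurableSpace Ω] [TopologicalSpace E] [PseudoMetrizableSpace E]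
    [TopologicalSpace Z] {g : Ω → E} (hg : StronglyMeasurable g) {R : E → Z → Prop}
    (hR : ∀ ω, ∃ z, ∀ᶠ e in 𝓝 (g ω), R e z) :
    ∃ f : Ω → Z, StronglyMeasurable f ∧ ∀ ω, R (g ω) (f ω) := by
  classical
  borelize E
  rcases isEmpty_or_nonempty Ω with _ | ⟨⟨ω₀⟩⟩
  · exact ⟨isEmptyElim, .of_discrete, isEmptyElim⟩
  have : Nonempty Z := ⟨(hR ω₀).choose⟩
  let U : Z → Set E := fun z ↦ interior {e | R e z}
  have U_subset (z : Z) : U z ⊆ {e | R e z} := interior_subset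
  have range_subset : range g ⊆ ⋃ z, U z := by
    rintro _ ⟨ω, rfl⟩
    exact mem_iUnion.mpr ((hR ω).imp fun _ ↦ mem_interior_iff_mem_nhds.mpr)
  obtain ⟨z, hz⟩ := (isLindelof_of_isSeparable hg.isSeparable_range).indexed_countable_subcover
    U (fun _ ↦ isOpen_interior) range_subset
  have exists_index (ω : Ω) : ∃ n, g ω ∈ U (z n) := mem_iUnion.mp (hz (mem_range_self ω))
  have measurable_index : Measurable fun ω ↦ Nat.find (exists_index ω) :=
    measurable_find exists_index fun _ ↦ hg.measurable isOpen_interior.measurableSet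
  exact ⟨fun ω ↦ z (Nat.find (exists_index ω)),
    StronglyMeasurable.of_discrete.comp_measurable measurable_index,
    fun ω ↦ U_subset _ (Nat.find_spec (exists_index ω))⟩

section Operator

variable {𝕜 𝕜₂ X Y : Type*} [DenselyNormedField 𝕜] [NontriviallyNormedField 𝕜₂]
  {σ : 𝕜 →+* 𝕜₂} [RingHomIsometric σ]
  [NormedAddCommGroup X] [SeminormedAddCommGroup Y] [NormedSpace 𝕜 X] [NormedSpace 𝕜₂ Y]

theorem exists_norm_lt_one_eventually_opNorm_lt (T : X →SL[σ] Y) {ε : ℝ} (hε : 0 < ε) :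
    ∃ x : X, ‖x‖ < 1 ∧ ∀ᶠ S in 𝓝 T, ‖S‖ < ‖S x‖ + ε := by
  obtain ⟨x, hx, hTx⟩ := T.exists_lt_apply_of_lt_opNorm (sub_lt_self ‖T‖ hε)
  have continuous_apply : Continuous fun S : X →SL[σ] Y ↦ S x := continuous_eval_const x
  exact ⟨x, hx, continuous_norm.continuousAt.eventually_lt
    (continuous_apply.norm.add_const ε).continuousAt (sub_lt_iff_lt_add.mp hTx)⟩

theorem strongly_measurable_operator_valued_normable_general
    {Ω : Type*} [MeasurableSpace Ω] {μ : Measure Ω} {Φ : Ω → X →SL[σ] Y}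
    (hΦ : AEStronglyMeasurable Φ μ) {ε : ℝ} (hε : 0 < ε) :
    ∃ f : Ω → X, StronglyMeasurable f ∧ (∀ ω, ‖f ω‖ < 1) ∧
      ∀ᵐ ω ∂μ, ‖Φ ω‖ < ‖Φ ω (f ω)‖ + ε := by
  obtain ⟨f, hf, hfΦ⟩ := exists_stronglyMeasurable_selection_of_eventually
    (R := fun S x ↦ ‖x‖ < 1 ∧ ‖S‖ < ‖S x‖ + ε) hΦ.stronglyMeasurable_mk fun ω ↦
      (exists_norm_lt_one_eventually_opNorm_lt (hΦ.mk Φ ω) hε).imp fun _ hx ↦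
        hx.2.mono fun _ hS ↦ ⟨hx.1, hS⟩
  refine ⟨f, hf, fun ω ↦ (hfΦ ω).1, ?_⟩
  filter_upwards [hΦ.ae_eq_mk] with ω hω
  rw [hω]
  exact (hfΦ ω).2

end Operator

/-- Proposition 1.1 of Blasco–van Neerven.
If `Φ : Ω → L(X,Y)` is strongly `μ`-measurable (with respect to the operator norm),
then for every `ε > 0` there is a strongly `μ`-measurable `f : Ω → X` with
`‖f ω‖ ≤ 1` and `‖Φ ω‖ ≤ ‖Φ ω (f ω)‖ + ε` for `μ`-almost all `ω`. -/
theorem strongly_measurable_operator_valued_normable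
    {Ω : Type*} [MeasurableSpace Ω] {𝕜 X Y : Type*} [RCLike 𝕜]
    [NormedAddCommGroup X] [NormedSpace 𝕜 X] [CompleteSpace X]
    [NormedAddCommGroup Y] [NormedSpace 𝕜 Y] [CompleteSpace Y]
    (μ : Measure Ω) [IsFiniteMeasure μ]
    (Φ : Ω → X →L[𝕜] Y) (hΦ : AEStronglyMeasurable Φ μ) :
    ∀ ε : ℝ, 0 < ε → ∃ f : Ω → X, AEStronglyMeasurable f μ ∧
      ∀ᵐ ω ∂μ, ‖f ω‖ ≤ 1 ∧ ‖Φ ω‖ ≤ ‖Φ ω (f ω)‖ + ε := by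
  intro ε hε
  obtain ⟨f, hf, hf_norm, hfΦ⟩ := strongly_measurable_operator_valued_normable_general hΦ hε
  exact ⟨f, hf.aestronglyMeasurable, hfΦ.mono fun ω hω ↦ ⟨(hf_norm ω).le, hω.le⟩⟩
end

section
/- Let (Ω, Σ, μ) be a finite measure space, X a separable Banach space, Y a Banach space, and Φ: Ω → L(X,Y) a function such that ω ↦ ‖Φ(ω)x‖ is μ-measurable for every x ∈ X. Then Φ is strongly μ-normable: for every ε > 0 there exists a strongly μ-measurable f: Ω → X such that for μ-almost all ω ∈ Ω one has ‖f(ω)‖ ≤ 1 and ‖Φ(ω)‖ ≤ ‖Φ(ω)f(ω)‖ + ε. -/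
open MeasureTheory

/-!
The norm of an operator is the supremum of its values along a sequence `u` dense in the unit ball.
Given `ω`, let `N ω` be an index for which `‖Φ ω (u (N ω))‖` is within `ε` of this supremum. That
condition is a countable conjunction of measurable inequalities, so `N` can be chosen measurable,
and `f ω = u (N ω)` takes only countably many values.
-/

theorem exists_forall_le_add_of_bddAbove {ι : Type*} [Nonempty ι] {a : ι → ℝ}
    (ha : BddAbove (Set.range a)) {ε : ℝ} (hε : 0 < ε) : ∃ i, ∀ j, a j ≤ a i + ε := by
  obtain ⟨i, hi⟩ := exists_lt_of_lt_ciSup (sub_lt_self (⨆ j, a j) hε)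
  exact ⟨i, fun j ↦ (le_ciSup ha j).trans (sub_lt_iff_lt_add.1 hi).le⟩

section Selection

variable {Ω ι : Type*} [MeasurableSpace Ω] [MeasurableSpace ι] [Countable ι] [Nonempty ι]

theorem exists_measurable_forall_exists_imp {p : Ω → ι → Prop}
    (hp : ∀ i, MeasurableSet {ω | p ω i}) :
    ∃ N : Ω → ι, Measurable N ∧ ∀ ω, (∃ i, p ω i) → p ω (N ω) := by
  classical
  obtain ⟨e, he⟩ := exists_surjective_nat ι
  have exists_index (ω : Ω) : ∃ n, (∃ i, p ω i) → p ω (e n) := by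
    obtain ⟨n, hn⟩ := he (Classical.epsilon (p ω))
    exact ⟨n, fun hω ↦ hn ▸ Classical.epsilon_spec hω⟩
  have measurableSet_index (n : ℕ) : MeasurableSet {ω | (∃ i, p ω i) → p ω (e n)} :=
    measurableSet_setOfPred.2 <|
      (Measurable.exists fun i ↦ measurableSet_setOfPred.1 (hp i)).imp
        (measurableSet_setOfPred.1 (hp (e n)))
  exact ⟨fun ω ↦ e (Nat.find (exists_index ω)),
    (measurable_from_nat (f := e)).comp (measurable_find exists_index measurableSet_index),
    fun ω ↦ Nat.find_spec (exists_index ω)⟩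

theorem exists_measurable_forall_le_add {g : ι → Ω → ℝ} (hg : ∀ i, Measurable (g i))
    {ε : ℝ} (hε : 0 < ε) :
    ∃ N : Ω → ι, Measurable N ∧
      ∀ ω, BddAbove (Set.range (g · ω)) → ∀ i, g i ω ≤ g (N ω) ω + ε := by
  have measurableSet_nearly_maximal (i : ι) : MeasurableSet {ω | ∀ j, g j ω ≤ g i ω + ε} := by
    rw [Set.ofPred_forall]
    exact .iInter fun j ↦ measurableSet_le (hg j) ((hg i).add_const ε)
  obtain ⟨N, hN, hNmax⟩ := exists_measurable_forall_exists_imp measurableSet_nearly_maximal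
  exact ⟨N, hN, fun ω hω ↦ hNmax ω (exists_forall_le_add_of_bddAbove hω hε)⟩

theorem exists_measurable_ae_forall_le_add {μ : Measure Ω} {g : ι → Ω → ℝ}
    (hg : ∀ i, AEMeasurable (g i) μ) {ε : ℝ} (hε : 0 < ε) :
    ∃ N : Ω → ι, Measurable N ∧
      ∀ᵐ ω ∂μ, BddAbove (Set.range (g · ω)) → ∀ i, g i ω ≤ g (N ω) ω + ε := by
  obtain ⟨N, hN, hNmax⟩ := exists_measurable_forall_le_add (fun i ↦ (hg i).measurable_mk) hε
  refine ⟨N, hN, ?_⟩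
  filter_upwards [ae_all_iff.2 fun i ↦ (hg i).ae_eq_mk] with ω hω
  simpa only [hω] using hNmax ω

end Selection

section OperatorNorm

variable {𝕜 𝕜₂ X Y : Type*} [DenselyNormedField 𝕜] [NontriviallyNormedField 𝕜₂]
  {σ : 𝕜 →+* 𝕜₂} [RingHomIsometric σ]
  [NormedAddCommGroup X] [NormedSpace 𝕜 X] [SeminormedAddCommGroup Y] [NormedSpace 𝕜₂ Y]

theorem opNorm_le_of_denseRange_closedBall {ι : Type*} {u : ι → Metric.closedBall (0 : X) 1}
    (hu : DenseRange u) (T : X →SL[σ] Y) {C : ℝ} (hC : ∀ i, ‖T (u i)‖ ≤ C) : ‖T‖ ≤ C := by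
  have le_on_ball (x : Metric.closedBall (0 : X) 1) : ‖T x‖ ≤ C :=
    hu.induction_on x (isClosed_le (by fun_prop) continuous_const) hC
  rw [← T.sSup_unitClosedBall_eq_norm]
  refine csSup_le ((Metric.nonempty_closedBall.2 zero_le_one).image _) ?_
  rintro _ ⟨x, hx, rfl⟩
  exact le_on_ball ⟨x, hx⟩

theorem separable_strongly_normable_general {Ω : Type*} [MeasurableSpace Ω]
    [TopologicalSpace.SeparableSpace X] {μ : Measure Ω} {Φ : Ω → X →SL[σ] Y}
    (hΦ : ∀ x, AEMeasurable (fun ω ↦ ‖Φ ω x‖) μ) {ε : ℝ} (hε : 0 < ε) :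
    ∃ f : Ω → X, StronglyMeasurable f ∧ (∀ ω, ‖f ω‖ ≤ 1) ∧
      ∀ᵐ ω ∂μ, ‖Φ ω‖ ≤ ‖Φ ω (f ω)‖ + ε := by
  let B := Metric.closedBall (0 : X) 1
  have : Nonempty B := (Metric.nonempty_closedBall.2 zero_le_one).to_subtype
  have : TopologicalSpace.SeparableSpace B :=
    (TopologicalSpace.IsSeparable.of_separableSpace B).separableSpace
  let u : ℕ → B := TopologicalSpace.denseSeq B
  have norm_u_le (n : ℕ) : ‖(u n : X)‖ ≤ 1 := mem_closedBall_zero_iff.1 (u n).2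
  obtain ⟨N, hN, hNmax⟩ := exists_measurable_ae_forall_le_add (fun n ↦ hΦ (u n)) hε
  refine ⟨fun ω ↦ u (N ω), ?_, fun ω ↦ norm_u_le (N ω), ?_⟩
  · exact (StronglyMeasurable.of_discrete (f := fun n ↦ (u n : X))).comp_measurable hN
  filter_upwards [hNmax] with ω hω
  have bddAbove_norms : BddAbove (Set.range fun n ↦ ‖Φ ω (u n)‖) :=
    ⟨‖Φ ω‖, Set.forall_mem_range.2 fun n ↦ (Φ ω).unit_le_opNorm _ (norm_u_le n)⟩
  exact opNorm_le_of_denseRange_closedBall (TopologicalSpace.denseRange_denseSeq B) (Φ ω)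
    (hω bddAbove_norms)

end OperatorNorm

/-- Corollary 2.3(1) of Blasco–van Neerven.
If `X` is a separable Banach space and `ω ↦ ‖Φ ω x‖` is `μ`-measurable for every
`x ∈ X`, then `Φ` is strongly `μ`-normable. -/
theorem separable_strongly_normable
    {Ω : Type*} [MeasurableSpace Ω] {𝕜 X Y : Type*} [RCLike 𝕜]
    [NormedAddCommGroup X] [NormedSpace 𝕜 X] [CompleteSpace X]
    [TopologicalSpace.SeparableSpace X]
    [NormedAddCommGroup Y] [NormedSpace 𝕜 Y] [CompleteSpace Y]
    (μ : Measure Ω) [IsFiniteMeasure μ]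
    (Φ : Ω → X →L[𝕜] Y)
    (hmeas : ∀ x : X, AEMeasurable (fun ω => ‖Φ ω x‖) μ) :
    ∀ ε : ℝ, 0 < ε → ∃ f : Ω → X, AEStronglyMeasurable f μ ∧
      ∀ᵐ ω ∂μ, ‖f ω‖ ≤ 1 ∧ ‖Φ ω‖ ≤ ‖Φ ω (f ω)‖ + ε := by
  intro ε hε
  obtain ⟨f, hf, hf_le, hf_norming⟩ := separable_strongly_normable_general hmeas hε
  exact ⟨f, hf.aestronglyMeasurable, hf_norming.mono fun ω hω ↦ ⟨hf_le ω, hω⟩⟩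
end

section
/- Let Ω be a topological space equipped with its Borel σ-algebra and let μ be a finite Borel measure on Ω that is inner regular with respect to compact sets (a finite Radon measure). Let S be a nonempty set and Φ: Ω → (S → ℝ) a function such that each Φ(ω) is bounded from above and such that for every s ∈ S the function ω ↦ (Φ(ω))(s) is lower semicontinuous. Then for every ε > 0 there exist pairwise disjoint Borel sets A_n ⊆ Ω (n ≥ 1) with ⋃_{n≥1} A_n = Ω and elements s_n ∈ S such that for μ-almost all ω ∈ Ω, if ω ∈ A_n then sup_{s∈S} (Φ(ω))(s) ≤ (Φ(ω))(s_n) + ε. -/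
open MeasureTheory

/-!
The superlevel sets `{ω | q < Φ ω s}` are open. Exhausting the measure of their union by countable
subfamilies gives a countable `T ⊆ S` such that each superlevel set is almost contained in the
union over `T`. What is left of the full union is then covered by relatively open null sets, so
every compact subset of it is null, and inner regularity makes it null. Letting `q` run through a
countable dense set, a single countable subset of `S` almost everywhere comes within `ε` of the
supremum; disjointifying the sets where its members do so gives the partition.
-/

open Set Topology TopologicalSpace

section MeasurableSpace

variable {α ι : Type*} {mα : MeasurableSpace α}

theorem exists_countable_measure_biUnion_maximal (μ : Measure α) (s : ι → Set α) :
    ∃ T : Set ι, T.Countable ∧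
      ∀ T' : Set ι, T'.Countable → μ (⋃ i ∈ T', s i) ≤ μ (⋃ i ∈ T, s i) := by
  let values := (fun T : Set ι ↦ μ (⋃ i ∈ T, s i)) '' {T | T.Countable}
  have values_nonempty : values.Nonempty := ⟨_, ∅, countable_empty, rfl⟩
  obtain ⟨u, -, hu_lim, hu_mem⟩ := exists_seq_tendsto_sSup values_nonempty (OrderTop.bddAbove _)
  choose T hT hTu using hu_mem
  refine ⟨⋃ n, T n, countable_iUnion hT, fun T' hT' ↦ ?_⟩
  have hu_le (n : ℕ) : u n ≤ μ (⋃ i ∈ ⋃ n, T n, s i) :=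
    (hTu n).symm.trans_le <| measure_mono <| biUnion_mono (subset_iUnion T n) fun _ _ ↦ le_rfl
  have h_le_sSup : μ (⋃ i ∈ T', s i) ≤ sSup values := le_sSup ⟨T', hT', rfl⟩
  exact h_le_sSup.trans (le_of_tendsto' hu_lim hu_le)

theorem exists_countable_forall_ae_le_biUnion (μ : Measure α) [SFinite μ] {s : ι → Set α}
    (hs : ∀ i, MeasurableSet (s i)) :
    ∃ T : Set ι, T.Countable ∧ ∀ i, s i ≤ᵐ[μ] ⋃ j ∈ T, s j := by
  obtain ⟨ν, _, hμν, -⟩ := exists_isFiniteMeasure_absolutelyContinuous μ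
  obtain ⟨T, hT, hT_max⟩ := exists_countable_measure_biUnion_maximal ν s
  refine ⟨T, hT, fun i ↦ hμν.ae_le ?_⟩
  have h_insert : ν (⋃ j ∈ insert i T, s j) ≤ ν (⋃ j ∈ T, s j) := hT_max _ (hT.insert i)
  rw [biUnion_insert] at h_insert
  have h_eq : ⋃ j ∈ T, s j =ᵐ[ν] (s i ∪ ⋃ j ∈ T, s j : Set α) :=
    ae_eq_of_subset_of_measure_ge subset_union_right h_insert
      (MeasurableSet.biUnion hT fun j _ ↦ hs j).nullMeasurableSet (measure_ne_top ν _)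
  exact subset_union_left.eventuallyLE.trans h_eq.symm.le

theorem exists_measurable_partition_ae_mem_of_mem {μ : Measure α} {C : ℕ → Set α}
    (hC : ∀ n, MeasurableSet (C n)) (hC_cover : ∀ᵐ x ∂μ, ∃ n, x ∈ C n) :
    ∃ A : ℕ → Set α, (∀ n, MeasurableSet (A n)) ∧ Pairwise (Function.onFun Disjoint A) ∧
      ⋃ n, A n = univ ∧ ∀ᵐ x ∂μ, ∀ n, x ∈ A n → x ∈ C n := by
  let D (n : ℕ) : Set α := C n ∪ (⋃ m, C m)ᶜ
  have hD (n : ℕ) : MeasurableSet (D n) := (hC n).union (MeasurableSet.iUnion hC).compl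
  refine ⟨disjointed D, fun n ↦ .disjointed hD n, disjoint_disjointed D, ?_, ?_⟩
  · rw [iUnion_disjointed, ← iUnion_union, union_compl_self]
  · filter_upwards [hC_cover] with x hx n hxn
    exact (disjointed_subset D n hxn).resolve_right (not_not_intro (mem_iUnion.2 hx))

end MeasurableSpace

section InnerRegular

variable {X ι : Type*} [TopologicalSpace X] [MeasurableSpace X] {μ : Measure X} [μ.InnerRegular]

theorem measure_eq_zero_of_locally_null_of_innerRegular {A : Set X} (hA : MeasurableSet A)
    (hA_null : ∀ x ∈ A, ∃ t ∈ 𝓝[A] x, μ t = 0) : μ A = 0 := by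
  by_contra hA_pos
  obtain ⟨K, hKA, hK, hK_pos⟩ := hA.exists_lt_isCompact (pos_iff_ne_zero.2 hA_pos)
  refine hK_pos.ne' (hK.measure_zero_of_nhdsWithin fun x hx ↦ ?_)
  obtain ⟨t, ht, ht_null⟩ := hA_null x (hKA hx)
  exact ⟨t, nhdsWithin_mono x hKA ht, ht_null⟩

variable [OpensMeasurableSpace X] [SFinite μ]

theorem exists_countable_iUnion_ae_le_biUnion_of_isOpen {V : ι → Set X}
    (hV : ∀ i, IsOpen (V i)) :
    ∃ T : Set ι, T.Countable ∧ ⋃ i, V i ≤ᵐ[μ] ⋃ i ∈ T, V i := by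
  obtain ⟨T, hT, hVT⟩ := exists_countable_forall_ae_le_biUnion μ fun i ↦ (hV i).measurableSet
  refine ⟨T, hT, ae_le_set.2 (measure_eq_zero_of_locally_null_of_innerRegular ?_ ?_)⟩
  · exact (isOpen_iUnion hV).measurableSet.diff (isOpen_biUnion fun i _ ↦ hV i).measurableSet
  · rintro x ⟨hx, -⟩
    obtain ⟨i, hxi⟩ := mem_iUnion.1 hx
    refine ⟨V i \ ⋃ j ∈ T, V j, ?_, ae_le_set.1 (hVT i)⟩
    filter_upwards [self_mem_nhdsWithin, mem_nhdsWithin_of_mem_nhds ((hV i).mem_nhds hxi)]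
      with y hy hyi using ⟨hyi, hy.2⟩

theorem exists_countable_ae_forall_lt_exists_lt_of_lowerSemicontinuous {E : Type*} [LinearOrder E]
    [TopologicalSpace E] [OrderClosedTopology E] [DenselyOrdered E] [SeparableSpace E]
    {f : ι → X → E} (hf : ∀ i, LowerSemicontinuous (f i)) :
    ∃ T : Set ι, T.Countable ∧ ∀ᵐ x ∂μ, ∀ i, ∀ c < f i x, ∃ j ∈ T, c < f j x := by
  obtain ⟨D, hD, hD_dense⟩ := exists_countable_dense E
  have h_level (d : E) : ∃ T : Set ι, T.Countable ∧
      ⋃ i, f i ⁻¹' Ioi d ≤ᵐ[μ] ⋃ i ∈ T, f i ⁻¹' Ioi d :=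
    exists_countable_iUnion_ae_le_biUnion_of_isOpen fun i ↦ (hf i).isOpen_preimage d
  choose T hT hT_level using h_level
  refine ⟨⋃ d ∈ D, T d, hD.biUnion fun d _ ↦ hT d, ?_⟩
  filter_upwards [(ae_ball_iff hD).2 fun d _ ↦ hT_level d] with x hx i c hc
  obtain ⟨d, hdD, hcd, hdi⟩ := hD_dense.exists_between hc
  obtain ⟨j, hj, hdj⟩ := mem_iUnion₂.1 (hx d hdD (mem_iUnion.2 ⟨i, hdi⟩))
  exact ⟨j, mem_biUnion hdD hj, hcd.trans hdj⟩

end InnerRegular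

theorem radon_lsc_elementary_normable_general
    {Ω : Type*} [TopologicalSpace Ω] [MeasurableSpace Ω] [OpensMeasurableSpace Ω]
    {S : Type*} [Nonempty S]
    (μ : Measure Ω) [SFinite μ] [μ.InnerRegular]
    (Φ : Ω → S → ℝ)
    (hbdd : ∀ ω, BddAbove (range (Φ ω)))
    (hlsc : ∀ s : S, LowerSemicontinuous (fun ω => Φ ω s))
    (ε : ℝ) (hε : 0 < ε) :
    ∃ (A : ℕ → Set Ω) (s : ℕ → S),
      (∀ n, MeasurableSet (A n)) ∧
      Pairwise (Function.onFun Disjoint A) ∧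
      (⋃ n, A n) = univ ∧
      ∀ᵐ ω ∂μ, ∀ n, ω ∈ A n → (⨆ t : S, Φ ω t) ≤ Φ ω (s n) + ε := by
  obtain ⟨T, hT, hT_sup⟩ :=
    exists_countable_ae_forall_lt_exists_lt_of_lowerSemicontinuous (μ := μ) hlsc
  obtain ⟨s, hs⟩ := countable_iff_exists_subset_range.1 hT
  let C (n : ℕ) : Set Ω := {ω | (⨆ t : S, Φ ω t) ≤ Φ ω (s n) + ε}
  have hC (n : ℕ) : MeasurableSet (C n) :=
    measurableSet_le (lowerSemicontinuous_ciSup hbdd hlsc).measurable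
      ((hlsc (s n)).measurable.add_const ε)
  have hC_cover : ∀ᵐ ω ∂μ, ∃ n, ω ∈ C n := by
    filter_upwards [hT_sup] with ω hω
    obtain ⟨t, ht⟩ := exists_lt_of_lt_ciSup (sub_lt_self (⨆ t : S, Φ ω t) hε)
    obtain ⟨u, huT, hu⟩ := hω t _ ht
    obtain ⟨n, rfl⟩ := hs huT
    exact ⟨n, (sub_lt_iff_lt_add.1 hu).le⟩
  obtain ⟨A, hA, hA_disj, hA_univ, hA_mem⟩ := exists_measurable_partition_ae_mem_of_mem hC hC_cover
  exact ⟨A, s, hA, hA_disj, hA_univ, hA_mem⟩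

/-- Proposition 2.5 of Blasco–van Neerven.
Let `μ` be a finite Radon measure (finite Borel measure, inner regular with respect
to compact sets) on a topological space `Ω`, and let `Φ : Ω → (S → ℝ)` take values in
the functions bounded from above, with each evaluation `ω ↦ Φ ω s` lower
semicontinuous. Then for every `ε > 0` there is a countable Borel partition `(A n)`
of `Ω` and elements `s n ∈ S` such that for `μ`-almost all `ω`, if `ω ∈ A n` then
`⨆ t, Φ ω t ≤ Φ ω (s n) + ε`. -/
theorem radon_lsc_elementary_normable
    {Ω : Type*} [TopologicalSpace Ω] [MeasurableSpace Ω] [BorelSpace Ω]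
    {S : Type*} [Nonempty S]
    (μ : Measure Ω) [IsFiniteMeasure μ] [μ.InnerRegular]
    (Φ : Ω → S → ℝ)
    (hbdd : ∀ ω, BddAbove (Set.range (Φ ω)))
    (hlsc : ∀ s : S, LowerSemicontinuous (fun ω => Φ ω s))
    (ε : ℝ) (hε : 0 < ε) :
    ∃ (A : ℕ → Set Ω) (s : ℕ → S),
      (∀ n, MeasurableSet (A n)) ∧
      Pairwise (Function.onFun Disjoint A) ∧
      (⋃ n, A n) = Set.univ ∧
      ∀ᵐ ω ∂μ, ∀ n, ω ∈ A n → (⨆ t : S, Φ ω t) ≤ Φ ω (s n) + ε :=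
  radon_lsc_elementary_normable_general μ Φ hbdd hlsc ε hε
end

section
/- Let Ω be a topological space equipped with its Borel σ-algebra and let μ be a finite Borel measure on Ω that is inner regular with respect to compact sets. Let X and Y be Banach spaces and Φ: Ω → L(X,Y) a function such that ω ↦ ‖Φ(ω)x‖ is lower semicontinuous for every x ∈ X. Then Φ is strongly μ-normable: for every ε > 0 there exists a strongly μ-measurable f: Ω → X such that for μ-almost all ω ∈ Ω one has ‖f(ω)‖ ≤ 1 and ‖Φ(ω)‖ ≤ ‖Φ(ω)f(ω)‖ + ε. -/
open MeasureTheory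

/-!
An s-finite measure has the same null sets as some finite measure, so among the countable unions of
sets from a given family there is one of maximal measure, and it contains every member of the family
up to a null set. If the members are open, compact inner regularity upgrades this to the full union:
a compact subset of the union that avoids the maximal countable union is covered by finitely many
members, each meeting it in a null set, so it is null. Applied to the superlevel sets of the
functions `ω ↦ ‖Φ ω x‖` with `x` in the unit ball, at levels in a countable dense set, this produces
countably many `x` for which the supremum of `‖Φ ω x‖` is `‖Φ ω‖` for almost every `ω`. Choosing the
first `x` of an enumeration that comes within `ε` of the supremum is then a measurable selection.
-/

section CountableSubfamily

variable {Ω ι : Type*} [MeasurableSpace Ω] (μ : Measure Ω) [SFinite μ]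

theorem exists_countable_forall_measure_sdiff_biUnion_eq_zero {A : ι → Set Ω}
    (hA : ∀ i, NullMeasurableSet (A i) μ) :
    ∃ C : Set ι, C.Countable ∧ ∀ i, μ (A i \ ⋃ j ∈ C, A j) = 0 := by
  let m : {C : Set ι // C.Countable} → ENNReal := fun C => μ.toFinite (⋃ j ∈ C.1, A j)
  have : Nonempty {C : Set ι // C.Countable} := ⟨⟨∅, Set.countable_empty⟩⟩
  obtain ⟨u, -, hu_tendsto, hu_mem⟩ :=
    exists_seq_tendsto_sSup (Set.range_nonempty m) (OrderTop.bddAbove _)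
  choose C hC using hu_mem
  let D : {C : Set ι // C.Countable} :=
    ⟨⋃ n, (C n).1, Set.countable_iUnion fun n => (C n).2⟩
  have le_m_D : ∀ E, m E ≤ m D := fun E =>
    (le_sSup (Set.mem_range_self E)).trans <| le_of_tendsto' hu_tendsto fun n =>
      (hC n).symm.le.trans <| measure_mono <|
        Set.biUnion_subset_biUnion_left <| Set.subset_iUnion (fun n => (C n).1) n
  refine ⟨D, D.2, fun i => toFinite_apply_eq_zero_iff.1 ?_⟩
  have hD : NullMeasurableSet (⋃ j ∈ D.1, A j) μ.toFinite :=
    .biUnion D.2 fun j _ => (hA j).mono_ac (toFinite_absolutelyContinuous μ)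
  have hinsert : μ.toFinite (A i ∪ ⋃ j ∈ D.1, A j) ≤ m D := by
    simpa only [m, Set.biUnion_insert] using le_m_D ⟨insert i D.1, D.2.insert i⟩
  rw [← Set.union_sdiff_right, measure_sdiff Set.subset_union_right hD (measure_ne_top _ _)]
  exact tsub_eq_zero_of_le hinsert

variable [TopologicalSpace Ω] [OpensMeasurableSpace Ω] [μ.InnerRegular]

theorem exists_countable_measure_iUnion_sdiff_eq_zero_of_isOpen {U : ι → Set Ω}
    (hU : ∀ i, IsOpen (U i)) :
    ∃ C : Set ι, C.Countable ∧ μ ((⋃ i, U i) \ ⋃ j ∈ C, U j) = 0 := by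
  obtain ⟨C, hC, hnull⟩ := exists_countable_forall_measure_sdiff_biUnion_eq_zero μ
    fun i => (hU i).measurableSet.nullMeasurableSet
  refine ⟨C, hC, ?_⟩
  have hmeas : MeasurableSet ((⋃ i, U i) \ ⋃ j ∈ C, U j) :=
    (isOpen_iUnion hU).measurableSet.diff (isOpen_biUnion fun j _ => hU j).measurableSet
  by_contra hpos
  obtain ⟨K, hKsub, hK, hKpos⟩ := hmeas.exists_lt_isCompact (pos_iff_ne_zero.2 hpos)
  refine hKpos.ne' (hK.measure_zero_of_nhdsWithin fun ω hω => ?_)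
  obtain ⟨i, hi⟩ := Set.mem_iUnion.1 (hKsub hω).1
  refine ⟨U i ∩ K, Filter.inter_mem (mem_nhdsWithin_of_mem_nhds ((hU i).mem_nhds hi))
    self_mem_nhdsWithin, ?_⟩
  have hsub : U i ∩ K ⊆ U i \ ⋃ j ∈ C, U j := fun _ h => ⟨h.1, (hKsub h.2).2⟩
  exact measure_mono_null hsub (hnull i)

theorem exists_countable_ae_isLUB_of_lowerSemicontinuous {β : Type*} [LinearOrder β]
    [TopologicalSpace β] [OrderClosedTopology β] [DenselyOrdered β]
    [TopologicalSpace.SeparableSpace β] {g : ι → Ω → β} {G : Ω → β}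
    (hg : ∀ i, LowerSemicontinuous (g i)) (hG : ∀ ω, IsLUB (Set.range fun i => g i ω) (G ω)) :
    ∃ C : Set ι, C.Countable ∧ ∀ᵐ ω ∂μ, IsLUB ((fun i => g i ω) '' C) (G ω) := by
  obtain ⟨Q, hQ, hQ_dense⟩ := TopologicalSpace.exists_countable_dense β
  choose C hC hnull using fun q : β =>
    exists_countable_measure_iUnion_sdiff_eq_zero_of_isOpen μ fun i => (hg i).isOpen_preimage q
  have hae : ∀ᵐ ω ∂μ, ∀ q ∈ Q, ω ∉ (⋃ i, g i ⁻¹' Set.Ioi q) \ ⋃ j ∈ C q, g j ⁻¹' Set.Ioi q :=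
    (ae_ball_iff hQ).2 fun q _ => measure_eq_zero_iff_ae_notMem.1 (hnull q)
  refine ⟨⋃ q ∈ Q, C q, hQ.biUnion fun q _ => hC q, ?_⟩
  filter_upwards [hae] with ω hω
  refine ⟨upperBounds_mono_set (Set.image_subset_range _ _) (hG ω).1, fun b hb => ?_⟩
  by_contra! hbG
  obtain ⟨q, hqQ, hbq, hqG⟩ := hQ_dense.exists_between hbG
  obtain ⟨_, ⟨i, rfl⟩, hqi⟩ := (lt_isLUB_iff (hG ω)).1 hqG
  have hmem : ω ∈ ⋃ j ∈ C q, g j ⁻¹' Set.Ioi q := by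
    by_contra h
    exact hω q hqQ ⟨Set.mem_iUnion.2 ⟨i, hqi⟩, h⟩
  obtain ⟨j, hj, hqj⟩ := Set.mem_iUnion₂.1 hmem
  exact (hb (Set.mem_image_of_mem _ (Set.mem_biUnion hqQ hj))).not_gt (hbq.trans hqj)

end CountableSubfamily

section Selection

variable {Ω ι : Type*} [MeasurableSpace Ω] [TopologicalSpace ι] [Nonempty ι]

theorem exists_stronglyMeasurable_selection_of_countable {C : Set ι} (hC : C.Countable)
    {p : ι → Ω → Prop} (hp : ∀ i ∈ C, MeasurableSet {ω | p i ω}) :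
    ∃ f : Ω → ι, StronglyMeasurable f ∧ ∀ ω, (∃ i ∈ C, p i ω) → p (f ω) ω := by
  classical
  obtain rfl | hne := C.eq_empty_or_nonempty
  · exact ⟨fun _ => Classical.arbitrary ι, stronglyMeasurable_const, by simp⟩
  obtain ⟨x, rfl⟩ := hC.exists_eq_range hne
  replace hp : ∀ n, MeasurableSet {ω | p (x n) ω} := fun n => hp _ (Set.mem_range_self n)
  -- Weakening `p` to an implication makes the search succeed at every point.
  have hex : ∀ ω, ∃ n, (∃ k, p (x k) ω) → p (x n) ω := fun ω => by
    by_cases h : ∃ k, p (x k) ω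
    · exact h.imp fun n hn _ => hn
    · exact ⟨0, fun h' => absurd h' h⟩
  have hfind : Measurable fun ω => Nat.find (hex ω) :=
    measurable_find hex fun n => .imp (by simpa only [Set.ofPred_exists] using .iUnion hp) (hp n)
  refine ⟨fun ω => x (Nat.find (hex ω)),
    (StronglyMeasurable.of_discrete (f := x)).comp_measurable hfind, fun ω h => ?_⟩
  exact Nat.find_spec (hex ω) (Set.exists_range_iff.1 h)

theorem exists_stronglyMeasurable_ae_isLUB_lt_add [TopologicalSpace Ω] [OpensMeasurableSpace Ω]
    (μ : Measure Ω) [SFinite μ] [μ.InnerRegular] {g : ι → Ω → ℝ} {G : Ω → ℝ}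
    (hg : ∀ i, LowerSemicontinuous (g i)) (hG : ∀ ω, IsLUB (Set.range fun i => g i ω) (G ω))
    {ε : ℝ} (hε : 0 < ε) :
    ∃ f : Ω → ι, StronglyMeasurable f ∧ ∀ᵐ ω ∂μ, G ω < g (f ω) ω + ε := by
  have hG_lsc : LowerSemicontinuous G := by
    rw [show G = fun ω => ⨆ i, g i ω from funext fun ω => (hG ω).ciSup_eq.symm]
    exact lowerSemicontinuous_ciSup (fun ω => (hG ω).bddAbove) hg
  obtain ⟨C, hC, hCsup⟩ := exists_countable_ae_isLUB_of_lowerSemicontinuous μ hg hG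
  obtain ⟨f, hf, hfsel⟩ :=
    exists_stronglyMeasurable_selection_of_countable hC (p := fun i ω => G ω < g i ω + ε)
      fun i _ => measurableSet_lt hG_lsc.measurable ((hg i).measurable.add_const ε)
  refine ⟨f, hf, ?_⟩
  filter_upwards [hCsup] with ω hω
  obtain ⟨_, ⟨i, hi, rfl⟩, hlt⟩ := (lt_isLUB_iff hω).1 (sub_lt_self (G ω) hε)
  exact hfsel ω ⟨i, hi, sub_lt_iff_lt_add.1 hlt⟩

end Selection

section OperatorValued

variable {𝕜 𝕜₂ X Y : Type*} [DenselyNormedField 𝕜] [NontriviallyNormedField 𝕜₂] {σ : 𝕜 →+* 𝕜₂}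
  [RingHomIsometric σ] [NormedAddCommGroup X] [NormedSpace 𝕜 X]
  [SeminormedAddCommGroup Y] [NormedSpace 𝕜₂ Y]

theorem isLUB_range_norm_apply_unitBall (T : X →SL[σ] Y) :
    IsLUB (Set.range fun x : Metric.ball (0 : X) 1 => ‖T x‖) ‖T‖ := by
  refine ⟨?_, fun b hb => ?_⟩
  · rintro _ ⟨x, rfl⟩
    exact T.unit_le_opNorm x (mem_ball_zero_iff.1 x.2).le
  · by_contra! hbT
    obtain ⟨x, hx, hbx⟩ := T.exists_lt_apply_of_lt_opNorm hbT
    exact (hb ⟨⟨x, mem_ball_zero_iff.2 hx⟩, rfl⟩).not_gt hbx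

theorem radon_lsc_strongly_normable_general {Ω : Type*} [TopologicalSpace Ω] [MeasurableSpace Ω]
    [OpensMeasurableSpace Ω] (μ : Measure Ω) [SFinite μ] [μ.InnerRegular] (Φ : Ω → X →SL[σ] Y)
    (hlsc : ∀ x : X, LowerSemicontinuous fun ω => ‖Φ ω x‖) {ε : ℝ} (hε : 0 < ε) :
    ∃ f : Ω → X, StronglyMeasurable f ∧ (∀ ω, ‖f ω‖ < 1) ∧
      ∀ᵐ ω ∂μ, ‖Φ ω‖ < ‖Φ ω (f ω)‖ + ε := by
  have : Nonempty (Metric.ball (0 : X) 1) := ⟨⟨0, Metric.mem_ball_self one_pos⟩⟩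
  obtain ⟨f, hf, hfε⟩ := exists_stronglyMeasurable_ae_isLUB_lt_add μ
    (g := fun (x : Metric.ball (0 : X) 1) ω => ‖Φ ω x‖) (fun x => hlsc x)
    (fun ω => isLUB_range_norm_apply_unitBall (Φ ω)) hε
  exact ⟨fun ω => f ω, continuous_subtype_val.comp_stronglyMeasurable hf,
    fun ω => mem_ball_zero_iff.1 (f ω).2, hfε⟩

end OperatorValued

/-- Corollary 2.6(1) of Blasco–van Neerven.
Let `μ` be a finite Radon measure on a topological space `Ω`. If `ω ↦ ‖Φ ω x‖` is
lower semicontinuous for every `x ∈ X`, then `Φ` is strongly `μ`-normable. -/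
theorem radon_lsc_strongly_normable
    {Ω : Type*} [TopologicalSpace Ω] [MeasurableSpace Ω] [BorelSpace Ω]
    {𝕜 X Y : Type*} [RCLike 𝕜]
    [NormedAddCommGroup X] [NormedSpace 𝕜 X] [CompleteSpace X]
    [NormedAddCommGroup Y] [NormedSpace 𝕜 Y] [CompleteSpace Y]
    (μ : Measure Ω) [IsFiniteMeasure μ] [μ.InnerRegular]
    (Φ : Ω → X →L[𝕜] Y)
    (hlsc : ∀ x : X, LowerSemicontinuous (fun ω => ‖Φ ω x‖)) :
    ∀ ε : ℝ, 0 < ε → ∃ f : Ω → X, AEStronglyMeasurable f μ ∧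
      ∀ᵐ ω ∂μ, ‖f ω‖ ≤ 1 ∧ ‖Φ ω‖ ≤ ‖Φ ω (f ω)‖ + ε := by
  intro ε hε
  obtain ⟨f, hf, hball, hfε⟩ := radon_lsc_strongly_normable_general μ Φ hlsc hε
  exact ⟨f, hf.aestronglyMeasurable, hfε.mono fun ω hω => ⟨(hball ω).le, hω.le⟩⟩
end

section
/- Let (Ω, Σ, μ) be a finite measure space, X, Y Banach spaces, 1 < p < ∞ and 1/p + 1/p' = 1. Let Φ: Ω → L(X,Y) be such that ω ↦ Φ(ω)x is strongly μ-measurable for every x ∈ X, and suppose C := sup { ∫_Ω ‖Φ(ω)f(ω)‖ dμ(ω) : f: Ω → X strongly μ-measurable with (∫_Ω ‖f‖^{p'} dμ)^{1/p'} ≤ 1 } < ∞. Define F(A) ∈ L(X,Y) for A ∈ Σ by F(A)x := ∫_A Φ(ω)x dμ(ω). Then for every finite partition π of Ω into pairwise disjoint sets of Σ with strictly positive μ-measure one has Σ_{A∈π} ‖F(A)‖^p / μ(A)^{p-1} ≤ C^p; that is, F has V^p(μ; L(X,Y))-norm at most C. -/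
open MeasureTheory

/-!
Testing the bracket norm on step functions `∑ A, 1_A z_A` gives `∑ A, ‖F A z_A‖ ≤ C` whenever
`∑ A, ‖z_A‖ ^ p' μ(A) ≤ 1`. Letting each `z_A` run through the ball of radius `b_A` turns this into
`∑ A, b_A ‖F A‖ ≤ C` whenever `∑ A, b_A ^ p' μ(A) ≤ 1`, and the duality of the weighted finite
`ℓ^p` spaces converts the latter family of inequalities into the bound on the `p`-variation.
-/

open scoped ENNReal NNReal

section WeightedDuality

variable {ι : Type*} {s : Finset ι} {p q : ℝ}

theorem sum_rpow_le_rpow_of_forall_sum_mul_le (hpq : p.HolderConjugate q) {a : ι → ℝ≥0} {C : ℝ≥0}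
    (h : ∀ g : ι → ℝ≥0, ∑ i ∈ s, g i ^ q ≤ 1 → ∑ i ∈ s, a i * g i ≤ C) :
    ∑ i ∈ s, a i ^ p ≤ C ^ p := by
  obtain ⟨g, hg, hgsum⟩ := (NNReal.isGreatest_Lp s a hpq).1
  have hroot : (∑ i ∈ s, a i ^ p) ^ (1 / p) ≤ C := hgsum.symm.trans_le (h g hg)
  rwa [one_div, NNReal.rpow_inv_le_iff hpq.pos] at hroot

theorem sum_rpow_div_rpow_le_of_forall_sum_mul_le (hpq : p.HolderConjugate q)
    {a w : ι → ℝ≥0} {C : ℝ≥0} (hw : ∀ i ∈ s, w i ≠ 0)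
    (h : ∀ b : ι → ℝ≥0, ∑ i ∈ s, b i ^ q * w i ≤ 1 → ∑ i ∈ s, b i * a i ≤ C) :
    ∑ i ∈ s, a i ^ p / w i ^ (p - 1) ≤ C ^ p := by
  have hrescale (i : ι) : (a i / w i ^ q⁻¹) ^ p = a i ^ p / w i ^ (p - 1) := by
    rw [NNReal.div_rpow, ← NNReal.rpow_mul, inv_mul_eq_div, hpq.div_conj_eq_sub_one]
  simp only [← hrescale]
  refine sum_rpow_le_rpow_of_forall_sum_mul_le hpq fun g hg => ?_
  calc ∑ i ∈ s, a i / w i ^ q⁻¹ * g i = ∑ i ∈ s, g i / w i ^ q⁻¹ * a i :=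
        Finset.sum_congr rfl fun i _ => by ring
    _ ≤ C := h _ <| hg.trans_eq' <| Finset.sum_congr rfl fun i hi => by
        rw [NNReal.div_rpow, NNReal.rpow_inv_rpow hpq.symm.ne_zero, div_mul_cancel₀ _ (hw i hi)]

end WeightedDuality

section OperatorNorm

variable {𝕜 X Y : Type*} [DenselyNormedField 𝕜] [NormedAddCommGroup X] [NormedSpace 𝕜 X]
  [NormedAddCommGroup Y] [NormedSpace 𝕜 Y]

theorem exists_norm_le_lt_norm_apply (T : X →L[𝕜] Y) {b r : ℝ} (hb : 0 ≤ b) (hr : r < b * ‖T‖) :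
    ∃ x : X, ‖x‖ ≤ b ∧ r < ‖T x‖ := by
  obtain hr_neg | hr_nonneg := lt_or_ge r 0
  · exact ⟨0, by simpa using hb, by simpa using hr_neg⟩
  have hb_pos : 0 < b := hb.lt_of_ne fun h => by simp [← h, hr_nonneg.not_gt] at hr
  obtain ⟨x, hx, hTx⟩ := T.exists_lt_apply_of_lt_opNorm ((div_lt_iff₀' hb_pos).2 hr)
  have hTx_pos : 0 < ‖T x‖ := (div_nonneg hr_nonneg hb).trans_lt hTx
  obtain ⟨c, hrc, hcb⟩ := NormedField.exists_lt_norm_lt 𝕜 (div_nonneg hr_nonneg hTx_pos.le)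
    ((div_lt_comm₀ hb_pos hTx_pos).1 hTx)
  refine ⟨c • x, ?_, ?_⟩
  · rw [norm_smul]
    exact (mul_le_of_le_one_right (norm_nonneg c) hx.le).trans hcb.le
  · rwa [map_smul, norm_smul, ← div_lt_iff₀ hTx_pos]

theorem sum_mul_opNorm_le_of_forall_sum_norm_apply_le {ι : Type*} {s : Finset ι}
    {T : ι → X →L[𝕜] Y} {b : ι → ℝ} {C : ℝ} (hb : ∀ i, 0 ≤ b i)
    (h : ∀ z : ι → X, (∀ i, ‖z i‖ ≤ b i) → ∑ i ∈ s, ‖T i (z i)‖ ≤ C) :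
    ∑ i ∈ s, b i * ‖T i‖ ≤ C := by
  refine le_of_forall_pos_le_add fun ε hε => ?_
  obtain ⟨δ, hδ, hδε⟩ := exists_pos_mul_lt hε (s.card : ℝ)
  choose z hz hTz using fun i =>
    exists_norm_le_lt_norm_apply (T i) (hb i) (sub_lt_self (b i * ‖T i‖) hδ)
  calc ∑ i ∈ s, b i * ‖T i‖ ≤ ∑ i ∈ s, (‖T i (z i)‖ + δ) :=
        Finset.sum_le_sum fun i _ => (sub_lt_iff_lt_add.1 (hTz i)).le
    _ = ∑ i ∈ s, ‖T i (z i)‖ + s.card * δ := by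
        rw [Finset.sum_add_distrib, Finset.sum_const, nsmul_eq_mul]
    _ ≤ C + ε := add_le_add (h z hz) hδε.le

end OperatorNorm

section StepFunction

variable {Ω ι M N : Type*} [AddCommMonoid M] [AddCommMonoid N] {s : Finset ι} {A : ι → Set Ω}

/-- The step function `∑ i ∈ s, 1_{A i} z i`. The sets `A i` may overlap and need not cover `Ω`. -/
noncomputable def stepFunction (s : Finset ι) (A : ι → Set Ω) (z : ι → M) (ω : Ω) : M :=
  ∑ i ∈ s, (A i).indicator (fun _ => z i) ω

theorem stepFunction_of_mem (hA : (s : Set ι).PairwiseDisjoint A) (z : ι → M) {i : ι} (hi : i ∈ s)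
    {ω : Ω} (hω : ω ∈ A i) : stepFunction s A z ω = z i := by
  refine (Finset.sum_eq_single_of_mem i hi fun j hj hji => ?_).trans (Set.indicator_of_mem hω _)
  exact Set.indicator_of_notMem (Set.disjoint_right.1 (hA hj hi hji) hω) _

theorem stepFunction_of_forall_notMem (z : ι → M) {ω : Ω} (hω : ∀ i ∈ s, ω ∉ A i) :
    stepFunction s A z ω = 0 :=
  Finset.sum_eq_zero fun i hi => Set.indicator_of_notMem (hω i hi) _

theorem apply_stepFunction (hA : (s : Set ι).PairwiseDisjoint A) (z : ι → M) {g : M → N}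
    (hg : g 0 = 0) (ω : Ω) : g (stepFunction s A z ω) = stepFunction s A (fun i => g (z i)) ω := by
  by_cases hω : ∃ i ∈ s, ω ∈ A i
  · obtain ⟨i, hi, hωi⟩ := hω
    rw [stepFunction_of_mem hA z hi hωi, stepFunction_of_mem hA _ hi hωi]
  · push Not at hω
    rw [stepFunction_of_forall_notMem z hω, stepFunction_of_forall_notMem _ hω, hg]

variable [MeasurableSpace Ω]

theorem stronglyMeasurable_stepFunction [TopologicalSpace M] [ContinuousAdd M]
    (hA : ∀ i ∈ s, MeasurableSet (A i)) (z : ι → M) : StronglyMeasurable (stepFunction s A z) :=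
  Finset.stronglyMeasurable_fun_sum s fun i hi => stronglyMeasurable_const.indicator (hA i hi)

theorem lintegral_stepFunction (hA : ∀ i ∈ s, MeasurableSet (A i)) (c : ι → ℝ≥0∞)
    (μ : Measure Ω) : ∫⁻ ω, stepFunction s A c ω ∂μ = ∑ i ∈ s, c i * μ (A i) := by
  simp only [stepFunction]
  rw [lintegral_finsetSum s fun i hi => measurable_const.indicator (hA i hi)]
  exact Finset.sum_congr rfl fun i hi => lintegral_indicator_const (hA i hi) _

theorem eLpNorm_stepFunction {X : Type*} [NormedAddCommGroup X] {q : ℝ} (hq : 0 < q)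
    (hAmeas : ∀ i ∈ s, MeasurableSet (A i)) (hAdisj : (s : Set ι).PairwiseDisjoint A) (z : ι → X)
    (μ : Measure Ω) :
    eLpNorm (stepFunction s A z) (ENNReal.ofReal q) μ =
      (∑ i ∈ s, ‖z i‖ₑ ^ q * μ (A i)) ^ (1 / q) := by
  rw [eLpNorm_eq_lintegral_rpow_enorm_toReal (by simpa using hq) ENNReal.ofReal_ne_top,
    ENNReal.toReal_ofReal hq.le, ← lintegral_stepFunction hAmeas]
  simp only [apply_stepFunction hAdisj z (g := fun x => ‖x‖ₑ ^ q) (by simp [hq])]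

end StepFunction

section BracketNorm

variable {Ω 𝕜 X Y : Type*} [MeasurableSpace Ω] [NontriviallyNormedField 𝕜]
  [NormedAddCommGroup X] [NormedSpace 𝕜 X] [NormedAddCommGroup Y] [NormedSpace 𝕜 Y]

/-- The bound `‖Φ‖ ≤ C` for the `L^p[μ; L(X, Y)]`-norm, where `q` is the exponent conjugate to `p`:
multiplication by `Φ` maps the unit ball of `L^q(μ; X)` into the ball of radius `C` of `L¹(μ; Y)`.
Integrability is part of the bound, since the Bochner integral of a non-integrable function is `0`.
-/
def BracketNormLE (Φ : Ω → X →L[𝕜] Y) (q : ℝ≥0∞) (μ : Measure Ω) (C : ℝ) : Prop :=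
  ∀ f : Ω → X, AEStronglyMeasurable f μ → eLpNorm f q μ ≤ 1 →
    Integrable (fun ω => Φ ω (f ω)) μ ∧ ∫ ω, ‖Φ ω (f ω)‖ ∂μ ≤ C

variable {μ : Measure Ω} {Φ : Ω → X →L[𝕜] Y} {C : ℝ}

theorem BracketNormLE.nonneg {q : ℝ≥0∞} (hΦ : BracketNormLE Φ q μ C) : 0 ≤ C := by
  simpa using (hΦ 0 aestronglyMeasurable_zero (by simp)).2

theorem BracketNormLE.sum_setIntegral_norm_apply_le {q : ℝ}
    (hΦ : BracketNormLE Φ (ENNReal.ofReal q) μ C) (hq : 0 < q)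
    {ι : Type*} {s : Finset ι} {A : ι → Set Ω} (hAmeas : ∀ i ∈ s, MeasurableSet (A i))
    (hAdisj : (s : Set ι).PairwiseDisjoint A) {z : ι → X}
    (hz : ∑ i ∈ s, ‖z i‖ₑ ^ q * μ (A i) ≤ 1) :
    ∑ i ∈ s, ∫ ω in A i, ‖Φ ω (z i)‖ ∂μ ≤ C := by
  obtain ⟨hint, hle⟩ := hΦ (stepFunction s A z)
    (stronglyMeasurable_stepFunction hAmeas z).aestronglyMeasurable <| by
      rw [eLpNorm_stepFunction hq hAmeas hAdisj]
      exact ENNReal.rpow_le_one hz (by positivity)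
  calc ∑ i ∈ s, ∫ ω in A i, ‖Φ ω (z i)‖ ∂μ
      = ∑ i ∈ s, ∫ ω in A i, ‖Φ ω (stepFunction s A z ω)‖ ∂μ :=
        Finset.sum_congr rfl fun i hi => setIntegral_congr_fun (hAmeas i hi) fun ω hω => by
          simp only [stepFunction_of_mem hAdisj z hi hω]
    _ = ∫ ω in ⋃ i ∈ s, A i, ‖Φ ω (stepFunction s A z ω)‖ ∂μ :=
        (integral_biUnion_finset s hAmeas hAdisj fun _ _ => hint.norm.integrableOn).symm
    _ ≤ ∫ ω, ‖Φ ω (stepFunction s A z ω)‖ ∂μ :=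
        setIntegral_le_integral hint.norm (.of_forall fun _ => norm_nonneg _)
    _ ≤ C := hle

end BracketNorm

section PVariation

variable {Ω 𝕜 X Y : Type*} [MeasurableSpace Ω] [DenselyNormedField 𝕜]
  [NormedAddCommGroup X] [NormedSpace 𝕜 X] [NormedAddCommGroup Y] [NormedSpace 𝕜 Y]
  {μ : Measure Ω} {Φ : Ω → X →L[𝕜] Y} {C : ℝ}

theorem BracketNormLE.sum_mul_opNorm_le {q : ℝ}
    (hΦ : BracketNormLE Φ (ENNReal.ofReal q) μ C) (hq : 0 < q)
    {ι : Type*} {s : Finset ι} {A : ι → Set Ω} (hAmeas : ∀ i ∈ s, MeasurableSet (A i))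
    (hAdisj : (s : Set ι).PairwiseDisjoint A)
    {T : ι → X →L[𝕜] Y} (hT : ∀ i ∈ s, ∀ x, ‖T i x‖ ≤ ∫ ω in A i, ‖Φ ω x‖ ∂μ)
    {b : ι → ℝ≥0} (hb : ∑ i ∈ s, (b i : ℝ≥0∞) ^ q * μ (A i) ≤ 1) :
    ∑ i ∈ s, b i * ‖T i‖ ≤ C := by
  refine sum_mul_opNorm_le_of_forall_sum_norm_apply_le (fun i => (b i).coe_nonneg) fun z hz => ?_
  have hz_enorm (i : ι) : ‖z i‖ₑ ≤ b i := ENNReal.coe_le_coe.2 (hz i)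
  have hz_sum : ∑ i ∈ s, ‖z i‖ₑ ^ q * μ (A i) ≤ 1 := le_trans (by gcongr; exact hz_enorm _) hb
  exact (Finset.sum_le_sum fun i hi => hT i hi (z i)).trans
    (hΦ.sum_setIntegral_norm_apply_le hq hAmeas hAdisj hz_sum)

theorem p_variation_bound_of_bracket_norm_general [NormedSpace ℝ Y] [CompleteSpace Y]
    {p p' : ℝ} (hpp' : p.HolderConjugate p')
    (hΦ : BracketNormLE Φ (ENNReal.ofReal p') μ C) {π : Finset (Set Ω)} {F : Set Ω → X →L[𝕜] Y}
    (hF : ∀ A ∈ π, ∀ x, F A x = ∫ ω in A, Φ ω x ∂μ)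
    (hπmeas : ∀ A ∈ π, MeasurableSet A) (hπpos : ∀ A ∈ π, 0 < μ A) (hπfin : ∀ A ∈ π, μ A ≠ ∞)
    (hπdisj : (π : Set (Set Ω)).PairwiseDisjoint id) :
    ∑ A ∈ π, ‖F A‖ ^ p / (μ A).toReal ^ (p - 1) ≤ C ^ p := by
  lift C to ℝ≥0 using hΦ.nonneg
  have hF_le : ∀ A ∈ π, ∀ x, ‖F A x‖ ≤ ∫ ω in A, ‖Φ ω x‖ ∂μ := fun A hA x =>
    (hF A hA x).symm ▸ norm_integral_le_integral_norm _
  have hweight : ∀ A ∈ π, (μ A).toNNReal ≠ 0 := fun A hA =>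
    (ENNReal.toNNReal_pos (hπpos A hA).ne' (hπfin A hA)).ne'
  have hdual : ∑ A ∈ π, ‖F A‖₊ ^ p / (μ A).toNNReal ^ (p - 1) ≤ C ^ p := by
    refine sum_rpow_div_rpow_le_of_forall_sum_mul_le hpp' hweight fun b hb => ?_
    have hb_enn : ∑ A ∈ π, (b A : ℝ≥0∞) ^ p' * μ A ≤ 1 := by
      calc ∑ A ∈ π, (b A : ℝ≥0∞) ^ p' * μ A
          = ((∑ A ∈ π, b A ^ p' * (μ A).toNNReal : ℝ≥0) : ℝ≥0∞) := by
            push_cast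
            refine Finset.sum_congr rfl fun A hA => ?_
            rw [ENNReal.coe_toNNReal (hπfin A hA),
              ENNReal.coe_rpow_of_nonneg _ hpp'.symm.nonneg]
        _ ≤ 1 := mod_cast hb
    rw [← NNReal.coe_le_coe]
    push_cast
    exact hΦ.sum_mul_opNorm_le hpp'.symm.pos hπmeas hπdisj hF_le hb_enn
  rw [← NNReal.coe_le_coe] at hdual
  push_cast at hdual
  exact hdual

end PVariation

/-- Theorem 3.5 of Blasco–van Neerven.
If the `L^p[μ; L(X,Y)]`-norm of `Φ` is at most `C < ∞` (i.e. `Φ f ∈ L^1(μ;Y)` with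
`∫ ‖Φ f‖ dμ ≤ C` for every strongly `μ`-measurable `f` with `‖f‖_{L^{p'}} ≤ 1`),
then the vector measure `F A x = ∫_A Φ ω x dμ` satisfies
`∑_{A∈π} ‖F A‖^p / μ(A)^{p-1} ≤ C^p` for every finite partition `π` of `Ω` into
measurable sets of positive measure; that is, `‖F‖_{V^p} ≤ C`. -/
theorem p_variation_bound_of_bracket_norm
    {Ω : Type*} [MeasurableSpace Ω] {𝕜 X Y : Type*} [RCLike 𝕜]
    [NormedAddCommGroup X] [NormedSpace 𝕜 X] [CompleteSpace X]
    [NormedAddCommGroup Y] [NormedSpace 𝕜 Y] [NormedSpace ℝ Y] [CompleteSpace Y]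
    (μ : Measure Ω) [IsFiniteMeasure μ]
    (p p' : ℝ) (hp : 1 < p) (hpp' : 1 / p + 1 / p' = 1)
    (Φ : Ω → X →L[𝕜] Y)
    (horb : ∀ x : X, AEStronglyMeasurable (fun ω => Φ ω x) μ)
    (C : ℝ)
    (hC : ∀ f : Ω → X, AEStronglyMeasurable f μ →
      eLpNorm f (ENNReal.ofReal p') μ ≤ 1 →
      Integrable (fun ω => Φ ω (f ω)) μ ∧ ∫ ω, ‖Φ ω (f ω)‖ ∂μ ≤ C)
    (F : Set Ω → X →L[𝕜] Y)
    (hF : ∀ A : Set Ω, MeasurableSet A → ∀ x : X, F A x = ∫ ω in A, Φ ω x ∂μ)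
    (π : Finset (Set Ω))
    (hπmeas : ∀ A ∈ π, MeasurableSet A)
    (hπpos : ∀ A ∈ π, 0 < μ A)
    (hπdisj : (π : Set (Set Ω)).PairwiseDisjoint id)
    (hπcover : (⋃ A ∈ π, A) = Set.univ) :
    ∑ A ∈ π, ‖F A‖ ^ p / (μ A).toReal ^ (p - 1) ≤ C ^ p := by
  have hconj : p.HolderConjugate p' := Real.holderConjugate_iff.2 ⟨hp, by simpa using hpp'⟩
  exact p_variation_bound_of_bracket_norm_general hconj hC (fun A hA => hF A (hπmeas A hA)) hπmeas
    hπpos (fun A _ => measure_ne_top μ A) hπdisj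
end

section
/- Let (Ω, Σ, μ) be a finite measure space, X a separable Banach space, Y a Banach space. Let Φ: Ω → L(X,Y) be such that ω ↦ Φ(ω)x is strongly μ-measurable for every x ∈ X and C := sup { ∫_Ω ‖Φ(ω)f(ω)‖ dμ : f: Ω → X strongly μ-measurable with ‖f(ω)‖ ≤ 1 μ-a.e. } < ∞ (the L^1[μ;L(X,Y)]-norm of Φ). Define F(A) ∈ L(X,Y) for A ∈ Σ by F(A)x := ∫_A Φ(ω)x dμ(ω). Then: (i) F is countably additive in the operator norm, i.e., for every sequence (A_n)_{n≥1} of pairwise disjoint sets in Σ, F(⋃_{n≥1} A_n) = Σ_{n≥1} F(A_n) with convergence in L(X,Y); and (ii) for every finite partition π of Ω into pairwise disjoint sets of Σ with strictly positive μ-measure, Σ_{A∈π} ‖F(A)‖ ≤ C; that is, F has variation at most C. -/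
open MeasureTheory Filter

/-!
Fix finitely many disjoint measurable sets `A i` and vectors `x i` in the unit ball of `X`. The step
function `f` equal to `x i` on `A i` is admissible in the supremum defining the
`L^1[μ; L(X, Y)]`-norm, so `∑ i, ‖F (A i) (x i)‖ ≤ ∫ ‖Φ f‖ ∂μ ≤ C`. Choosing each `x i` to nearly
norm `F (A i)` bounds the variation by `C`. Consequently `∑ n, F (A n)` converges absolutely for
disjoint `A n`, and countable additivity of the Bochner integral along each orbit identifies
its sum.
-/

theorem sum_opNorm_le_of_forall_norm_le_one {ι 𝕜 X Y : Type*} [DenselyNormedField 𝕜]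
    [NormedAddCommGroup X] [NormedSpace 𝕜 X] [SeminormedAddCommGroup Y] [NormedSpace 𝕜 Y]
    {s : Finset ι} {T : ι → X →L[𝕜] Y} {C : ℝ}
    (h : ∀ x : ι → X, (∀ i, ‖x i‖ ≤ 1) → ∑ i ∈ s, ‖T i (x i)‖ ≤ C) :
    ∑ i ∈ s, ‖T i‖ ≤ C := by
  suffices mul_sum_le : ∀ r < (1 : ℝ), r * ∑ i ∈ s, ‖T i‖ ≤ C by
    have tendsto_sum : Tendsto (fun r : ℝ => r * ∑ i ∈ s, ‖T i‖) (nhdsWithin 1 (Set.Iio 1))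
        (nhds (∑ i ∈ s, ‖T i‖)) :=
      ((continuous_mul_const _).tendsto' 1 _ (one_mul _)).mono_left nhdsWithin_le_nhds
    exact le_of_tendsto tendsto_sum (eventually_mem_nhdsWithin.mono mul_sum_le)
  intro r hr
  have exists_almost_norming (i : ι) : ∃ x : X, ‖x‖ ≤ 1 ∧ r * ‖T i‖ ≤ ‖T i x‖ := by
    rcases (norm_nonneg (T i)).eq_or_lt with hT | hT
    · exact ⟨0, by simp [← hT]⟩
    · obtain ⟨x, hx, hTx⟩ := (T i).exists_lt_apply_of_lt_opNorm (mul_lt_of_lt_one_left hT hr)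
      exact ⟨x, hx.le, hTx.le⟩
  choose x hx hTx using exists_almost_norming
  calc r * ∑ i ∈ s, ‖T i‖ = ∑ i ∈ s, r * ‖T i‖ := Finset.mul_sum ..
    _ ≤ ∑ i ∈ s, ‖T i (x i)‖ := Finset.sum_le_sum fun i _ => hTx i
    _ ≤ C := h x hx

theorem exists_stronglyMeasurable_norm_le_eqOn_const {Ω ι E : Type*} [MeasurableSpace Ω]
    [SeminormedAddCommGroup E] {s : Finset ι} {A : ι → Set Ω}
    (hA : ∀ i ∈ s, MeasurableSet (A i)) (hd : (s : Set ι).PairwiseDisjoint A)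
    {x : ι → E} {c : ℝ} (hc : 0 ≤ c) (hx : ∀ i ∈ s, ‖x i‖ ≤ c) :
    ∃ f : Ω → E, StronglyMeasurable f ∧ (∀ ω, ‖f ω‖ ≤ c) ∧
      ∀ i ∈ s, Set.EqOn f (fun _ => x i) (A i) := by
  classical
  induction s using Finset.induction_on with
  | empty => exact ⟨0, stronglyMeasurable_zero, fun _ => by simpa using hc, by simp⟩
  | insert i s hi ih =>
    rw [Finset.forall_mem_insert] at hA hx
    rw [Finset.coe_insert, Set.pairwiseDisjoint_insert_of_notMem (Finset.mem_coe.not.2 hi)] at hd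
    obtain ⟨f, hf, hfc, hfA⟩ := ih hA.2 hd.1 hx.2
    refine ⟨(A i).piecewise (fun _ => x i) f, stronglyMeasurable_const.piecewise hA.1 hf,
      fun ω => ?_, (Finset.forall_mem_insert ..).2 ⟨Set.piecewise_eqOn .., fun j hj ω hω => ?_⟩⟩
    · by_cases hω : ω ∈ A i
      · simpa [hω] using hx.1
      · simpa [hω] using hfc ω
    · have hωi : ω ∉ A i := Set.disjoint_right.1 (hd.2 j hj) hω
      simpa [hωi] using hfA j hj hω

/-- `Φ` belongs to `L^1[μ; L(X, Y)]` with norm at most `C`. The supremum over the unit ball of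
`L^∞(μ; X)` is expressed by its upper bound `C`, together with integrability of each `Φ f`, as the
Bochner integral of a non-integrable function is `0`. -/
def L1BracketNormLE {Ω 𝕜 X Y : Type*} [MeasurableSpace Ω] [NontriviallyNormedField 𝕜]
    [NormedAddCommGroup X] [NormedSpace 𝕜 X] [NormedAddCommGroup Y] [NormedSpace 𝕜 Y]
    (μ : Measure Ω) (Φ : Ω → X →L[𝕜] Y) (C : ℝ) : Prop :=
  ∀ f : Ω → X, AEStronglyMeasurable f μ → (∀ᵐ ω ∂μ, ‖f ω‖ ≤ 1) →
    Integrable (fun ω => Φ ω (f ω)) μ ∧ ∫ ω, ‖Φ ω (f ω)‖ ∂μ ≤ C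

namespace L1BracketNormLE

variable {Ω ι 𝕜 X Y : Type*} [MeasurableSpace Ω] [NormedAddCommGroup X] [NormedAddCommGroup Y]
  {μ : Measure Ω} {C : ℝ}

section NontriviallyNormedField

variable [NontriviallyNormedField 𝕜] [NormedSpace 𝕜 X] [NormedSpace 𝕜 Y] {Φ : Ω → X →L[𝕜] Y}

theorem integrable_apply (hΦ : L1BracketNormLE μ Φ C) (x : X) :
    Integrable (fun ω => Φ ω x) μ := by
  rcases eq_or_ne x 0 with rfl | hx
  · simp
  obtain ⟨c, hc⟩ := NormedField.exists_one_lt_norm 𝕜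
  obtain ⟨d, hd, hdx, -⟩ := rescale_to_shell hc one_pos hx
  have h_scaled : Integrable (fun ω => Φ ω (d • x)) μ :=
    (hΦ (fun _ => d • x) aestronglyMeasurable_const (.of_forall fun _ => hdx.le)).1
  simpa only [map_smul, integrable_fun_smul_iff hd] using h_scaled

theorem sum_norm_setIntegral_apply_le [NormedSpace ℝ Y] (hΦ : L1BracketNormLE μ Φ C)
    {s : Finset ι} {A : ι → Set Ω} (hA : ∀ i ∈ s, MeasurableSet (A i))
    (hd : (s : Set ι).PairwiseDisjoint A) {x : ι → X} (hx : ∀ i ∈ s, ‖x i‖ ≤ 1) :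
    ∑ i ∈ s, ‖∫ ω in A i, Φ ω (x i) ∂μ‖ ≤ C := by
  obtain ⟨f, hf, hf_le, hfA⟩ :=
    exists_stronglyMeasurable_norm_le_eqOn_const hA hd zero_le_one hx
  obtain ⟨hf_int, hf_C⟩ := hΦ f hf.aestronglyMeasurable (.of_forall hf_le)
  have norm_le (i : ι) (hi : i ∈ s) :
      ‖∫ ω in A i, Φ ω (x i) ∂μ‖ ≤ ∫ ω in A i, ‖Φ ω (f ω)‖ ∂μ := by
    rw [← setIntegral_congr_fun (hA i hi) fun ω hω => congrArg (Φ ω) (hfA i hi hω)]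
    exact norm_integral_le_integral_norm _
  calc ∑ i ∈ s, ‖∫ ω in A i, Φ ω (x i) ∂μ‖
      ≤ ∑ i ∈ s, ∫ ω in A i, ‖Φ ω (f ω)‖ ∂μ := Finset.sum_le_sum norm_le
    _ = ∫ ω in ⋃ i ∈ s, A i, ‖Φ ω (f ω)‖ ∂μ :=
        (integral_biUnion_finset s hA hd fun _ _ => hf_int.norm.integrableOn).symm
    _ ≤ ∫ ω, ‖Φ ω (f ω)‖ ∂μ :=
        setIntegral_le_integral hf_int.norm (.of_forall fun _ => norm_nonneg _)
    _ ≤ C := hf_C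

end NontriviallyNormedField

section DenselyNormedField

variable [DenselyNormedField 𝕜] [NormedSpace 𝕜 X] [NormedSpace 𝕜 Y] [NormedSpace ℝ Y]
  {Φ : Ω → X →L[𝕜] Y} {F : Set Ω → X →L[𝕜] Y}

theorem sum_opNorm_le (hΦ : L1BracketNormLE μ Φ C)
    (hF : ∀ A, MeasurableSet A → ∀ x, F A x = ∫ ω in A, Φ ω x ∂μ)
    {s : Finset ι} {A : ι → Set Ω} (hA : ∀ i ∈ s, MeasurableSet (A i))
    (hd : (s : Set ι).PairwiseDisjoint A) : ∑ i ∈ s, ‖F (A i)‖ ≤ C := by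
  refine sum_opNorm_le_of_forall_norm_le_one fun x hx => ?_
  calc ∑ i ∈ s, ‖F (A i) (x i)‖ = ∑ i ∈ s, ‖∫ ω in A i, Φ ω (x i) ∂μ‖ :=
        Finset.sum_congr rfl fun i hi => by rw [hF (A i) (hA i hi)]
    _ ≤ C := hΦ.sum_norm_setIntegral_apply_le hA hd fun i _ => hx i

theorem hasSum_iUnion [CompleteSpace Y] [Countable ι] (hΦ : L1BracketNormLE μ Φ C)
    (hF : ∀ A, MeasurableSet A → ∀ x, F A x = ∫ ω in A, Φ ω x ∂μ)
    {A : ι → Set Ω} (hA : ∀ i, MeasurableSet (A i)) (hd : Pairwise (Function.onFun Disjoint A)) :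
    HasSum (fun i => F (A i)) (F (⋃ i, A i)) := by
  have summable_norm : Summable fun i => ‖F (A i)‖ :=
    summable_of_sum_le (fun _ => norm_nonneg _) fun s =>
      hΦ.sum_opNorm_le hF (s := s) (fun i _ => hA i) (hd.set_pairwise _)
  have hasSum_tsum : HasSum (fun i => F (A i)) (∑' i, F (A i)) := summable_norm.of_norm.hasSum
  have tsum_eq : ∑' i, F (A i) = F (⋃ i, A i) := by
    ext x
    have hasSum_apply : HasSum (fun i => F (A i) x) (F (⋃ i, A i) x) := by
      simpa only [hF _ (hA _), hF _ (.iUnion hA)] using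
        hasSum_integral_iUnion hA hd (hΦ.integrable_apply x).integrableOn
    exact (hasSum_tsum.mapL (ContinuousLinearMap.apply 𝕜 Y x)).unique hasSum_apply
  exact tsum_eq ▸ hasSum_tsum

end DenselyNormedField

end L1BracketNormLE

theorem countably_additive_and_variation_bound_of_L1_bracket_general
    {Ω : Type*} [MeasurableSpace Ω] {𝕜 X Y : Type*} [DenselyNormedField 𝕜]
    [NormedAddCommGroup X] [NormedSpace 𝕜 X]
    [NormedAddCommGroup Y] [NormedSpace 𝕜 Y] [NormedSpace ℝ Y] [CompleteSpace Y]
    {μ : Measure Ω} {Φ : Ω → X →L[𝕜] Y} {C : ℝ} (hΦ : L1BracketNormLE μ Φ C)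
    {F : Set Ω → X →L[𝕜] Y}
    (hF : ∀ A : Set Ω, MeasurableSet A → ∀ x : X, F A x = ∫ ω in A, Φ ω x ∂μ) :
    (∀ A : ℕ → Set Ω, (∀ n, MeasurableSet (A n)) → Pairwise (Function.onFun Disjoint A) →
      HasSum (fun n => F (A n)) (F (⋃ n, A n))) ∧
    (∀ π : Finset (Set Ω), (∀ A ∈ π, MeasurableSet A) →
      (π : Set (Set Ω)).PairwiseDisjoint id → ∑ A ∈ π, ‖F A‖ ≤ C) :=
  ⟨fun _ hA hd => hΦ.hasSum_iUnion hF hA hd, fun _ hπ hd => hΦ.sum_opNorm_le hF hπ hd⟩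

/-- Theorem 3.8 of Blasco–van Neerven.
Let `X` be separable and suppose `Φ` has strongly `μ`-measurable orbits and
`L^1[μ;L(X,Y)]`-norm at most `C < ∞` (i.e. `Φ f ∈ L^1(μ;Y)` with `∫ ‖Φ f‖ dμ ≤ C`
for every strongly `μ`-measurable `f` with `‖f ω‖ ≤ 1` a.e.). Then the vector
measure `F A x = ∫_A Φ ω x dμ` is countably additive in the operator norm, and has
variation at most `C`: `∑_{A∈π} ‖F A‖ ≤ C` for every finite partition `π` of `Ω`
into measurable sets of positive measure. -/
theorem countably_additive_and_variation_bound_of_L1_bracket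
    {Ω : Type*} [MeasurableSpace Ω] {𝕜 X Y : Type*} [RCLike 𝕜]
    [NormedAddCommGroup X] [NormedSpace 𝕜 X] [CompleteSpace X]
    [TopologicalSpace.SeparableSpace X]
    [NormedAddCommGroup Y] [NormedSpace 𝕜 Y] [NormedSpace ℝ Y] [CompleteSpace Y]
    (μ : Measure Ω) [IsFiniteMeasure μ]
    (Φ : Ω → X →L[𝕜] Y)
    (horb : ∀ x : X, AEStronglyMeasurable (fun ω => Φ ω x) μ)
    (C : ℝ)
    (hC : ∀ f : Ω → X, AEStronglyMeasurable f μ → (∀ᵐ ω ∂μ, ‖f ω‖ ≤ 1) →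
      Integrable (fun ω => Φ ω (f ω)) μ ∧ ∫ ω, ‖Φ ω (f ω)‖ ∂μ ≤ C)
    (F : Set Ω → X →L[𝕜] Y)
    (hF : ∀ A : Set Ω, MeasurableSet A → ∀ x : X, F A x = ∫ ω in A, Φ ω x ∂μ) :
    (∀ A : ℕ → Set Ω, (∀ n, MeasurableSet (A n)) →
      Pairwise (Function.onFun Disjoint A) →
      Tendsto (fun N : ℕ => ∑ n ∈ Finset.range N, F (A n)) atTop
        (nhds (F (⋃ n, A n)))) ∧
    (∀ π : Finset (Set Ω), (∀ A ∈ π, MeasurableSet A) → (∀ A ∈ π, 0 < μ A) →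
      (π : Set (Set Ω)).PairwiseDisjoint id → (⋃ A ∈ π, A) = Set.univ →
      ∑ A ∈ π, ‖F A‖ ≤ C) := by
  obtain ⟨hasSum_F, sum_le⟩ := countably_additive_and_variation_bound_of_L1_bracket_general hC hF
  exact ⟨fun A hA hd => (hasSum_F A hA hd).tendsto_sum_nat, fun π hπ _ hd _ => sum_le π hπ hd⟩
end
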